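/- Let f : ℝ → ℂ be a Schwartz function. For (x,t) ∈ ℝ² define F_{x,t}(k) = (1/(2πi)) ∫_ℝ exp(i s x + i s³ t) f(s) / (s − k) ds for Im k ≠ 0. Then for every (x,t), the limit lim_{y → +∞} (i y) · F_{x,t}(i y) exists, and the function q(x,t) := −2πi · lim_{y → +∞} (i y) F_{x,t}(i y) is given by q(x,t) = ∫_ℝ exp(i k x + i k³ t) f(k) dk; in particular q is smooth and satisfies the linear KdV equation ∂_t q + ∂_x³ q = 0 on ℝ². -/

import Mathlib

open MeasureTheory Complex Filter Topology

/-- The Ehrenpreis-form solution of the linear KdV equation built from `f`. -/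
noncomputable def ehrenpreis (f : ℝ → ℂ) (x t : ℝ) : ℂ :=
  ∫ k : ℝ, Complex.exp (Complex.I * k * x + Complex.I * (k : ℂ) ^ 3 * t) * f k

/-- The `(2,1)` entry of the solution of the lower-triangular Riemann–Hilbert
problem: the Cauchy transform of `s ↦ e^{isx+is³t} f(s)`. -/
noncomputable def rhpEntry (f : ℝ → ℂ) (x t : ℝ) (k : ℂ) : ℂ :=
  (1 / (2 * Real.pi * Complex.I)) *
    ∫ s : ℝ, Complex.exp (Complex.I * s * x + Complex.I * (s : ℂ) ^ 3 * t) * f s / ((s : ℂ) - k)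

/-!
Multiplying the Cauchy transform of `g` by `z` turns its kernel into `z / (s - z)`, which tends
to `-1` as `z → ∞` and stays bounded when `z → ∞` nontangentially to the real axis; dominated
convergence then recovers `-∫ g`.

Smoothness: the Ehrenpreis integral is the Fourier transform of a complex measure carried by
the dispersion curve `k ↦ (k, k³)`, so finiteness of its moments makes it smooth. The equation holds
because `∂ₓ` and `∂ₜ` act on the density as multiplication by `ik` and `ik³`, and `(ik)³ = -ik³`.
-/

open Bornology

variable {α ι E V W : Type*} [NormedAddCommGroup E] [NormedSpace ℂ E]

theorem tendsto_div_const_sub_cobounded {𝕜 : Type*} [NormedField 𝕜] (a : 𝕜) :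
    Tendsto (fun z => z / (a - z)) (cobounded 𝕜) (𝓝 (-1)) := by
  have hinv : Tendsto (fun z => a * (a - z)⁻¹ - 1) (cobounded 𝕜) (𝓝 (a * 0 - 1)) :=
    ((tendsto_inv₀_cobounded.comp (tendsto_const_sub_cobounded a)).const_mul a).sub_const 1
  rw [mul_zero, zero_sub] at hinv
  refine hinv.congr' ?_
  filter_upwards [eventually_ne_cobounded a] with z hz
  have : a - z ≠ 0 := sub_ne_zero.2 hz.symm
  field_simp
  ring

/-- The bound `hC` expresses that `z` tends to `∞` nontangentially to the real axis. -/
theorem tendsto_smul_integral_inv_sub_smul {μ : Measure ℝ} {g : ℝ → E} (hg : Integrable g μ)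
    {l : Filter ι} [l.IsCountablyGenerated] {z : ι → ℂ} (hz : Tendsto z l (cobounded ℂ)) {C : ℝ}
    (hC : ∀ᶠ i in l, ∀ s : ℝ, ‖z i‖ ≤ C * ‖(s : ℂ) - z i‖) :
    Tendsto (fun i => z i • ∫ s : ℝ, ((s : ℂ) - z i)⁻¹ • g s ∂μ) l (𝓝 (-∫ s, g s ∂μ)) := by
  simp_rw [← integral_smul, smul_smul, ← div_eq_mul_inv, ← integral_neg]
  refine tendsto_integral_filter_of_dominated_convergence (fun s => max C 0 * ‖g s‖)
    (.of_forall fun i => ?_) ?_ (hg.norm.const_mul _) (.of_forall fun s => ?_)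
  · have : Measurable fun s : ℝ => z i / ((s : ℂ) - z i) := by fun_prop
    exact this.aestronglyMeasurable.smul hg.aestronglyMeasurable
  · filter_upwards [hC] with i hi
    refine .of_forall fun s => ?_
    rw [norm_smul, norm_div]
    gcongr
    refine div_le_of_le_mul₀ (norm_nonneg _) (le_max_right _ _) ((hi s).trans ?_)
    gcongr
    exact le_max_left _ _
  · simpa using ((tendsto_div_const_sub_cobounded (s : ℂ)).comp hz).smul_const (g s)

theorem tendsto_I_mul_ofReal_atTop_cobounded :
    Tendsto (fun y : ℝ => I * (y : ℂ)) atTop (cobounded ℂ) := by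
  rw [← tendsto_norm_atTop_iff_cobounded]
  simpa using tendsto_abs_atTop_atTop

theorem norm_I_mul_ofReal_le_norm_ofReal_sub_I_mul_ofReal (s y : ℝ) :
    ‖I * (y : ℂ)‖ ≤ ‖(s : ℂ) - I * y‖ := by
  simpa using abs_im_le_norm ((s : ℂ) - I * y)

theorem hasDerivAt_integral_cexp_smul [MeasurableSpace α] {μ : Measure α} {φ : α → ℝ}
    {g : α → E} (hφ : AEStronglyMeasurable φ μ) (hg : Integrable g μ)
    (hφg : Integrable (fun a => (φ a : ℂ) • g a) μ) (s : ℝ) :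
    HasDerivAt (fun r : ℝ => ∫ a, cexp (I * φ a * r) • g a ∂μ)
      (∫ a, cexp (I * φ a * s) • (I * φ a) • g a ∂μ) s := by
  have norm_phase (a : α) (r : ℝ) : ‖cexp (I * φ a * r)‖ = 1 := by simp [norm_exp]
  have phase_meas (r : ℝ) : AEStronglyMeasurable (fun a => cexp (I * φ a * r)) μ :=
    (show Continuous fun x : ℝ => cexp (I * x * r) by fun_prop).comp_aestronglyMeasurable hφ
  have hIφg : Integrable (fun a => (I * φ a) • g a) μ := by
    simpa only [mul_smul, Pi.smul_def] using hφg.smul I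
  refine (hasDerivAt_integral_of_dominated_loc_of_deriv_le
    (F := fun (r : ℝ) a => cexp (I * φ a * r) • g a)
    (F' := fun (r : ℝ) a => cexp (I * φ a * r) • (I * φ a) • g a)
    (bound := fun a => ‖(I * φ a) • g a‖) univ_mem
    (.of_forall fun r => (phase_meas r).smul hg.aestronglyMeasurable)
    (hg.mono ((phase_meas s).smul hg.aestronglyMeasurable) (.of_forall fun a => ?_))
    ((phase_meas s).smul hIφg.aestronglyMeasurable)
    (.of_forall fun a r _ => ?_) hIφg.norm (.of_forall fun a r _ => ?_)).2
  · rw [norm_smul, norm_phase, one_mul]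
  · rw [norm_smul, norm_phase, one_mul]
  · rw [smul_smul]
    simpa using (((hasDerivAt_id r).ofReal_comp.const_mul (I * (φ a : ℂ))).cexp).smul_const (g a)

theorem contDiff_integral_cexp_smul [MeasurableSpace α] {μ : Measure α}
    [NormedAddCommGroup V] [NormedSpace ℝ V] [MeasurableSpace V] [BorelSpace V]
    [SecondCountableTopology V] [NormedAddCommGroup W] [NormedSpace ℝ W]
    (L : V →L[ℝ] W →L[ℝ] ℝ) {γ : α → V} (hγ : MeasurableEmbedding γ) {g : α → E} {N : ℕ∞}
    (hg : ∀ n : ℕ, n ≤ N → Integrable (fun a => ‖γ a‖ ^ n * ‖g a‖) μ) :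
    ContDiff ℝ N (fun w => ∫ a, cexp (I * L (γ a) w) • g a ∂μ) := by
  -- As `γ` is injective, `g` can be carried over to `V`, where it is integrated against `μ.map γ`.
  have extend_apply (a : α) : Function.extend γ g 0 (γ a) = g a := hγ.injective.extend_apply g 0 a
  have hmoments (n : ℕ) (hn : n ≤ N) :
      Integrable (fun v => ‖v‖ ^ n * ‖Function.extend γ g 0 v‖) (μ.map γ) := by
    rw [hγ.integrable_map_iff]
    simpa only [Function.comp_def, extend_apply] using hg n hn
  convert VectorFourier.contDiff_fourierIntegral (-(2 * Real.pi)⁻¹ • L) hmoments using 2 with w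
  rw [VectorFourier.fourierIntegral, hγ.integral_map]
  congr 1 with a
  rw [extend_apply, Circle.smul_def, Real.fourierChar_apply]
  congr 2
  have pi_ne_zero : (Real.pi : ℂ) ≠ 0 := ofReal_ne_zero.2 Real.pi_ne_zero
  simp only [mul_inv_rev, map_smul, LinearMap.smul_apply, neg_smul, LinearMap.neg_apply,
    ContinuousLinearMap.toLinearMap₁₂_apply_apply_apply, smul_eq_mul, neg_neg, ofReal_mul,
    ofReal_ofNat, ofReal_inv]
  field_simp

section Ehrenpreis

variable {f : ℝ → ℂ}

theorem norm_cexp_phase (k x t : ℝ) : ‖cexp (I * k * x + I * (k : ℂ) ^ 3 * t)‖ = 1 := by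
  simp [norm_exp, ← ofReal_pow]

theorem integrable_cexp_phase_mul (hf : Integrable f) (x t : ℝ) :
    Integrable (fun k : ℝ => cexp (I * k * x + I * (k : ℂ) ^ 3 * t) * f k) := by
  refine hf.mono (.mul (Continuous.aestronglyMeasurable (by fun_prop)) hf.1) ?_
  refine .of_forall fun k => ?_
  rw [norm_mul, norm_cexp_phase, one_mul]

theorem ehrenpreis_neg (f : ℝ → ℂ) (x t : ℝ) :
    ehrenpreis (fun k => -f k) x t = -ehrenpreis f x t := by
  simp only [ehrenpreis, mul_neg, integral_neg]

theorem tendsto_mul_rhpEntry (hf : Integrable f) (x t : ℝ) :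
    Tendsto (fun y : ℝ => -(2 * Real.pi * I) * (I * y * rhpEntry f x t (I * y))) atTop
      (𝓝 (ehrenpreis f x t)) := by
  have hcauchy := (tendsto_smul_integral_inv_sub_smul (integrable_cexp_phase_mul hf x t)
    tendsto_I_mul_ofReal_atTop_cobounded (C := 1)
    (.of_forall fun y s => by
      simpa using norm_I_mul_ofReal_le_norm_ofReal_sub_I_mul_ofReal s y)).neg
  rw [neg_neg] at hcauchy
  refine hcauchy.congr fun y => ?_
  simp only [rhpEntry, smul_eq_mul, inv_mul_eq_div]
  rw [one_div, mul_left_comm (I * (y : ℂ)), neg_mul, mul_inv_cancel_left₀ two_pi_I_ne_zero]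

theorem hasDerivAt_ehrenpreis_space (hf : Integrable f)
    (hf₁ : Integrable (fun k : ℝ => (k : ℂ) * f k)) (x t : ℝ) :
    HasDerivAt (fun ξ => ehrenpreis f ξ t) (ehrenpreis (fun k => I * k * f k) x t) x := by
  have hg : Integrable (fun k : ℝ => cexp (I * (k : ℂ) ^ 3 * t) * f k) := by
    simpa using integrable_cexp_phase_mul hf 0 t
  have hg₁ : Integrable (fun k : ℝ => (k : ℂ) * (cexp (I * (k : ℂ) ^ 3 * t) * f k)) := by
    simpa [mul_left_comm] using integrable_cexp_phase_mul hf₁ 0 t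
  have h := hasDerivAt_integral_cexp_smul (φ := id) aestronglyMeasurable_id hg hg₁ x
  simpa only [ehrenpreis, exp_add, smul_eq_mul, id, mul_assoc, mul_left_comm] using h

theorem hasDerivAt_ehrenpreis_time (hf : Integrable f)
    (hf₃ : Integrable (fun k : ℝ => (k : ℂ) ^ 3 * f k)) (x t : ℝ) :
    HasDerivAt (fun τ => ehrenpreis f x τ) (ehrenpreis (fun k => I * (k : ℂ) ^ 3 * f k) x t) t := by
  have hg : Integrable (fun k : ℝ => cexp (I * k * x) * f k) := by
    simpa using integrable_cexp_phase_mul hf x 0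
  have hg₃ : Integrable (fun k : ℝ => ((k ^ 3 : ℝ) : ℂ) * (cexp (I * k * x) * f k)) := by
    simpa [mul_left_comm] using integrable_cexp_phase_mul hf₃ x 0
  have h := hasDerivAt_integral_cexp_smul (φ := fun k => k ^ 3)
    (Continuous.aestronglyMeasurable (by fun_prop)) hg hg₃ t
  simpa only [ehrenpreis, exp_add, smul_eq_mul, ofReal_pow, mul_assoc, mul_left_comm] using h

theorem iteratedDeriv_ehrenpreis_space {n : ℕ}
    (hf : ∀ m ≤ n, Integrable (fun k : ℝ => (k : ℂ) ^ m * f k)) (t : ℝ) :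
    iteratedDeriv n (fun ξ => ehrenpreis f ξ t) =
      fun ξ => ehrenpreis (fun k => (I * k) ^ n * f k) ξ t := by
  induction n with
  | zero => simp
  | succ n ih =>
    have hIpow (m : ℕ) (hm : m ≤ n + 1) : Integrable (fun k : ℝ => I ^ n * ((k : ℂ) ^ m * f k)) :=
      (hf m hm).const_mul _
    rw [iteratedDeriv_succ, ih fun m hm => hf m (hm.trans n.le_succ)]
    ext ξ
    rw [(hasDerivAt_ehrenpreis_space ((hIpow n n.le_succ).congr ?_)
      ((hIpow (n + 1) le_rfl).congr ?_) ξ t).deriv]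
    · simp only [pow_succ', mul_assoc]
    all_goals exact .of_forall fun k => by ring

theorem deriv_time_add_iteratedDeriv_space_ehrenpreis
    (hf : ∀ n ≤ 3, Integrable (fun k : ℝ => (k : ℂ) ^ n * f k)) (x t : ℝ) :
    deriv (fun τ => ehrenpreis f x τ) t + iteratedDeriv 3 (fun ξ => ehrenpreis f ξ t) x = 0 := by
  have hdispersion (k : ℝ) : (I * k) ^ 3 * f k = -(I * (k : ℂ) ^ 3 * f k) := by
    rw [mul_pow, I_pow_three]
    ring
  have hf₀ : Integrable f := by simpa using hf 0
  rw [(hasDerivAt_ehrenpreis_time hf₀ (hf 3 le_rfl) x t).deriv, iteratedDeriv_ehrenpreis_space hf]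
  simp only [hdispersion, ehrenpreis_neg, add_neg_cancel]

theorem norm_prodMk_pow_three_pow_le (k : ℝ) (n : ℕ) :
    ‖(k, k ^ 3)‖ ^ n ≤ ‖k ^ n‖ + ‖k ^ (3 * n)‖ := by
  calc ‖(k, k ^ 3)‖ ^ n = max (‖k‖ ^ n) (‖k ^ 3‖ ^ n) :=
        (pow_left_monotoneOn (n := n)).map_max (norm_nonneg _) (norm_nonneg _)
    _ = max ‖k ^ n‖ ‖k ^ (3 * n)‖ := by rw [← norm_pow, ← norm_pow, pow_mul]
    _ ≤ ‖k ^ n‖ + ‖k ^ (3 * n)‖ := max_le_add_of_nonneg (norm_nonneg _) (norm_nonneg _)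

theorem contDiff_ehrenpreis {N : ℕ∞}
    (hf : ∀ n : ℕ, n ≤ 3 * N → Integrable (fun k : ℝ => (k : ℂ) ^ n * f k)) :
    ContDiff ℝ N (fun p : ℝ × ℝ => ehrenpreis f p.1 p.2) := by
  let pairing : ℝ × ℝ →L[ℝ] ℝ × ℝ →L[ℝ] ℝ :=
    (ContinuousLinearMap.mul ℝ ℝ).bilinearComp (.fst ℝ ℝ ℝ) (.fst ℝ ℝ ℝ) +
      (ContinuousLinearMap.mul ℝ ℝ).bilinearComp (.snd ℝ ℝ ℝ) (.snd ℝ ℝ ℝ)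
  have hf₀ : Integrable f := by simpa using hf 0
  have hmoments (n : ℕ) (hn : n ≤ N) : Integrable (fun k : ℝ => ‖(k, k ^ 3)‖ ^ n * ‖f k‖) := by
    have hf_n := hf n (hn.trans (le_mul_of_one_le_left zero_le (by norm_num)))
    have hf_3n := hf (3 * n) (by push_cast; gcongr)
    refine (hf_n.norm.add hf_3n.norm).mono' (.mul ?_ hf₀.norm.1) (.of_forall fun k => ?_)
    · exact Continuous.aestronglyMeasurable (by fun_prop)
    · rw [Real.norm_of_nonneg (by positivity)]
      simpa [add_mul] using
        mul_le_mul_of_nonneg_right (norm_prodMk_pow_three_pow_le k n) (norm_nonneg (f k))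
  have hcurve : MeasurableEmbedding fun k : ℝ => (k, k ^ 3) :=
    Continuous.measurableEmbedding (by fun_prop) fun k l h => congrArg Prod.fst h
  have h := contDiff_integral_cexp_smul pairing hcurve hmoments
  simpa [ehrenpreis, pairing, mul_add, mul_assoc] using h

theorem rhp_reconstruction_linear_kdv_general
    (hf : ∀ n : ℕ, Integrable (fun k : ℝ => (k : ℂ) ^ n * f k)) :
    (∀ x t : ℝ,
      Tendsto (fun y : ℝ => -(2 * Real.pi * I) * (I * y * rhpEntry f x t (I * y))) atTop
        (𝓝 (ehrenpreis f x t))) ∧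
    ContDiff ℝ (⊤ : ℕ∞) (fun p : ℝ × ℝ => ehrenpreis f p.1 p.2) ∧
    ∀ x t : ℝ,
      deriv (fun τ : ℝ => ehrenpreis f x τ) t
        + iteratedDeriv 3 (fun ξ : ℝ => ehrenpreis f ξ t) x = 0 :=
  ⟨tendsto_mul_rhpEntry (by simpa using hf 0), contDiff_ehrenpreis fun n _ => hf n,
    deriv_time_add_iteratedDeriv_space_ehrenpreis fun n _ => hf n⟩

end Ehrenpreis

theorem integrable_ofReal_pow_mul_schwartzMap (f : SchwartzMap ℝ ℂ) (n : ℕ) :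
    Integrable (fun k : ℝ => (k : ℂ) ^ n * f k) := by
  rw [← integrable_norm_iff (Continuous.aestronglyMeasurable (by fun_prop))]
  simpa using f.integrable_pow_mul volume n

/-- for Schwartz `f`, the limit `lim_{y→∞} (iy) F_{x,t}(iy)` exists, the
reconstruction `q(x,t) = -2πi lim_{y→∞} (iy) F_{x,t}(iy)` equals the Ehrenpreis integral
`∫ e^{ikx+ik³t} f(k) dk`; in particular `q` is smooth and solves the linear KdV equation. -/
theorem rhp_reconstruction_linear_kdv (f : SchwartzMap ℝ ℂ) :
    (∀ x t : ℝ,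
      Tendsto (fun y : ℝ =>
          (-(2 * Real.pi * Complex.I)) * ((Complex.I * y) * rhpEntry f x t (Complex.I * y)))
        atTop (𝓝 (ehrenpreis f x t))) ∧
    ContDiff ℝ (⊤ : ℕ∞) (fun p : ℝ × ℝ => ehrenpreis f p.1 p.2) ∧
    ∀ x t : ℝ,
      deriv (fun τ : ℝ => ehrenpreis f x τ) t
        + iteratedDeriv 3 (fun ξ : ℝ => ehrenpreis f ξ t) x = 0 :=
  rhp_reconstruction_linear_kdv_general (integrable_ofReal_pow_mul_schwartzMap f)
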